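/- arXiv:2605.17715 — 5 statements merged into one kernel-verified Lean document; each statement's English description precedes it below -/
import Mathlib

section
/- Let A ∈ ℂ^{N×N} and A_h, M ∈ ℂ^{n×n}. Then the spectrum of I_N ⊗ A_h + A ⊗ M over ℂ equals the union over all λ in the spectrum of A of the spectra of A_h + λ·M; that is, μ ∈ ℂ is an eigenvalue of I_N ⊗ A_h + A ⊗ M if and only if there exists an eigenvalue λ of A such that μ is an eigenvalue of A_h + λ·M. -/
/-!
No triangularization of `A` is needed. Write `K = 1 ⊗ A_h + A ⊗ M` and `C = A ⊗ 1`; these commute.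
If `μ` is an eigenvalue of `K`, its eigenspace is nonzero and `C`-invariant, so over `ℂ` it contains
an eigenvector `x` of `C`, with eigenvalue `l` say. Then `(1 ⊗ (A_h + l M)) x = K x = μ x`. Seen as
an `N × n` array, every nonzero column of `x` is an eigenvector of `A` for `l` and every nonzero row
an eigenvector of `A_h + l M` for `μ`. Conversely, a product of eigenvectors of `A` and `A_h + l M`
is an eigenvector of `K`.
-/

open Matrix Kronecker

lemma mem_spectrum_iff_exists_mulVec {ι : Type*} [Fintype ι] [DecidableEq ι]
    (B : Matrix ι ι ℂ) (μ : ℂ) :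
    μ ∈ spectrum ℂ B ↔ ∃ v : ι → ℂ, v ≠ 0 ∧ B *ᵥ v = μ • v := by
  rw [← Matrix.spectrum_toLin' B, ← Module.End.hasEigenvalue_iff_mem_spectrum]
  constructor
  · intro h
    obtain ⟨v, hv⟩ := h.exists_hasEigenvector
    exact ⟨v, hv.2, by simpa using hv.apply_eq_smul⟩
  · rintro ⟨v, hv, h⟩
    exact Module.End.hasEigenvalue_of_hasEigenvector
      (x := v) ⟨Module.End.mem_eigenspace_iff.2 (by simpa using h), hv⟩

lemma exists_common_eigenvector {ι : Type*} [Fintype ι] [DecidableEq ι]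
    {K C : Matrix ι ι ℂ} (h : Commute K C) {μ : ℂ} (hμ : μ ∈ spectrum ℂ K) :
    ∃ l : ℂ, ∃ x : ι → ℂ, x ≠ 0 ∧ K *ᵥ x = μ • x ∧ C *ᵥ x = l • x := by
  obtain ⟨v, hv, hKv⟩ := (mem_spectrum_iff_exists_mulVec K μ).1 hμ
  have hmaps : ∀ x ∈ Module.End.eigenspace (toLin' K) μ,
      toLin' C x ∈ Module.End.eigenspace (toLin' K) μ := by
    intro x hx
    rw [Module.End.mem_eigenspace_iff, toLin'_apply] at hx ⊢
    rw [toLin'_apply, mulVec_mulVec, h.eq, ← mulVec_mulVec, hx, mulVec_smul]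
  have : Nontrivial (Module.End.eigenspace (toLin' K) μ) :=
    ⟨⟨⟨v, Module.End.mem_eigenspace_iff.2 (by simpa using hKv)⟩, 0,
      fun e => hv (congrArg Subtype.val e)⟩⟩
  obtain ⟨l, hl⟩ := Module.End.exists_eigenvalue ((toLin' C).restrict hmaps)
  obtain ⟨x, hx⟩ := hl.exists_hasEigenvector
  refine ⟨l, x, fun e => hx.2 (Subtype.ext e), ?_, ?_⟩
  · simpa using Module.End.mem_eigenspace_iff.1 x.2
  · simpa using congrArg Subtype.val hx.apply_eq_smul

lemma one_kronecker_mulVec_apply {N n : ℕ} (B : Matrix (Fin n) (Fin n) ℂ)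
    (x : Fin N × Fin n → ℂ) (i : Fin N) (j : Fin n) :
    (((1 : Matrix (Fin N) (Fin N) ℂ) ⊗ₖ B) *ᵥ x) (i, j) = (B *ᵥ fun b => x (i, b)) j := by
  simp [mulVec, dotProduct, Fintype.sum_prod_type, one_apply]

lemma kronecker_one_mulVec_apply {N n : ℕ} (A : Matrix (Fin N) (Fin N) ℂ)
    (x : Fin N × Fin n → ℂ) (i : Fin N) (j : Fin n) :
    ((A ⊗ₖ (1 : Matrix (Fin n) (Fin n) ℂ)) *ᵥ x) (i, j) = (A *ᵥ fun a => x (a, j)) i := by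
  simp [mulVec, dotProduct, Fintype.sum_prod_type, one_apply]

/-- On an eigenvector of `A ⊗ 1`, the factor `A` may be replaced by the eigenvalue. -/
lemma network_mulVec_eq {N n : ℕ} (A : Matrix (Fin N) (Fin N) ℂ)
    (Ah M : Matrix (Fin n) (Fin n) ℂ) {l : ℂ} {x : Fin N × Fin n → ℂ}
    (hx : (A ⊗ₖ (1 : Matrix (Fin n) (Fin n) ℂ)) *ᵥ x = l • x) :
    ((1 : Matrix (Fin N) (Fin N) ℂ) ⊗ₖ Ah + A ⊗ₖ M) *ᵥ x
      = ((1 : Matrix (Fin N) (Fin N) ℂ) ⊗ₖ (Ah + l • M)) *ᵥ x := by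
  have hfac : A ⊗ₖ M = ((1 : Matrix (Fin N) (Fin N) ℂ) ⊗ₖ M) * (A ⊗ₖ 1) := by
    rw [← mul_kronecker_mul, one_mul, mul_one]
  rw [hfac, add_mulVec, ← mulVec_mulVec, hx, mulVec_smul, kronecker_add, kronecker_smul,
    add_mulVec, smul_mulVec]

/-- the spectrum of `I_N ⊗ A_h + A ⊗ M` equals the union over `λ ∈ σ(A)`
of the spectra of `A_h + λ • M`. -/
theorem stmt_2 (N n : ℕ)
    (A : Matrix (Fin N) (Fin N) ℂ)
    (Ah M : Matrix (Fin n) (Fin n) ℂ) :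
    spectrum ℂ ((1 : Matrix (Fin N) (Fin N) ℂ) ⊗ₖ Ah + A ⊗ₖ M)
      = ⋃ l ∈ spectrum ℂ A, spectrum ℂ (Ah + l • M) := by
  ext μ
  simp only [Set.mem_iUnion, exists_prop]
  constructor
  · intro hμ
    have hcomm : Commute ((1 : Matrix (Fin N) (Fin N) ℂ) ⊗ₖ Ah + A ⊗ₖ M)
        (A ⊗ₖ (1 : Matrix (Fin n) (Fin n) ℂ)) := by
      simp only [Commute, SemiconjBy, add_mul, mul_add, ← mul_kronecker_mul, one_mul, mul_one]
    obtain ⟨l, x, hx0, hK, hC⟩ := exists_common_eigenvector hcomm hμ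
    rw [network_mulVec_eq A Ah M hC] at hK
    obtain ⟨⟨i, j⟩, hij⟩ := Function.ne_iff.1 hx0
    refine ⟨l, (mem_spectrum_iff_exists_mulVec _ _).2 ⟨fun a => x (a, j), ?_, ?_⟩,
      (mem_spectrum_iff_exists_mulVec _ _).2 ⟨fun b => x (i, b), ?_, ?_⟩⟩
    · exact fun e => hij (congrFun e i)
    · ext a
      rw [← kronecker_one_mulVec_apply, hC]
      rfl
    · exact fun e => hij (congrFun e j)
    · ext b
      rw [← one_kronecker_mulVec_apply, hK]
      rfl
  · rintro ⟨l, hl, hμ⟩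
    obtain ⟨u, hu0, hu⟩ := (mem_spectrum_iff_exists_mulVec _ _).1 hl
    obtain ⟨w, hw0, hw⟩ := (mem_spectrum_iff_exists_mulVec _ _).1 hμ
    obtain ⟨i, hi⟩ := Function.ne_iff.1 hu0
    obtain ⟨j, hj⟩ := Function.ne_iff.1 hw0
    refine (mem_spectrum_iff_exists_mulVec _ _).2 ⟨fun p => u p.1 * w p.2, ?_, ?_⟩
    · exact fun e => mul_ne_zero hi hj (congrFun e (i, j))
    · have hC : (A ⊗ₖ (1 : Matrix (Fin n) (Fin n) ℂ)) *ᵥ (fun p => u p.1 * w p.2)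
          = l • fun p : Fin N × Fin n => u p.1 * w p.2 := by
        ext ⟨a, b⟩
        have e : (fun a => u a * w b) = w b • u := by ext; simp [mul_comm]
        rw [kronecker_one_mulVec_apply, e, mulVec_smul, hu]
        simp only [Pi.smul_apply, smul_eq_mul]
        ring
      rw [network_mulVec_eq A Ah M hC]
      ext ⟨a, b⟩
      have e : (fun b => u a * w b) = u a • w := rfl
      rw [one_kronecker_mulVec_apply, e, mulVec_smul, hw]
      simp only [Pi.smul_apply, smul_eq_mul]
      ring
end

section
/- Let A ∈ ℂ^{N×N}, B ∈ ℂ^{N×M}, A_h ∈ ℂ^{n×n}, B_h ∈ ℂ^{n×m}, C_h ∈ ℂ^{m×n}, and set 𝒜 = I_N ⊗ A_h + A ⊗ (B_h C_h) and ℬ = B ⊗ B_h. Suppose v ∈ ℂ^N is nonzero with vᵀ A = λ vᵀ and vᵀ B = 0 for some λ ∈ ℂ, and suppose η ∈ ℂ^n is nonzero with ηᵀ (A_h + λ·(B_h C_h)) = μ ηᵀ for some μ ∈ ℂ. Then the vector z = v ⊗ η ∈ ℂ^{Nn} is nonzero and satisfies zᵀ 𝒜 = μ zᵀ and zᵀ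 ℬ = 0. -/
open Matrix Kronecker

/-! Left multiplication respects the tensor structure: `(v ⊗ η)ᵀ (P ⊗ Q) = (vᵀ P) ⊗ (ηᵀ Q)`
(`vecMul_kronecker_tensor`). Hence `zᵀ 𝒜 = v ⊗ (ηᵀ A_h) + (l v) ⊗ (ηᵀ B_h C_h)`; moving the scalar
`l` to the second factor gives `v ⊗ (ηᵀ (A_h + l B_h C_h)) = μ z`, while
`zᵀ ℬ = (vᵀ B) ⊗ (ηᵀ B_h) = 0`. -/

theorem vecMul_kronecker_tensor {a b c d : ℕ}
    (P : Matrix (Fin a) (Fin b) ℂ) (Q : Matrix (Fin c) (Fin d) ℂ)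
    (v : Fin a → ℂ) (η : Fin c → ℂ) :
    (fun p : Fin a × Fin c => v p.1 * η p.2) ᵥ* (P ⊗ₖ Q)
      = fun p => (v ᵥ* P) p.1 * (η ᵥ* Q) p.2 := by
  funext p
  simp only [vecMul, dotProduct, kroneckerMap_apply, Fintype.sum_prod_type, Finset.sum_mul_sum]
  exact Finset.sum_congr rfl fun _ _ => Finset.sum_congr rfl fun _ _ => by ring

/-- a left PBH obstruction `v` for `(A, B)` together with a left
eigenvector `η` of `A_h + λ B_h C_h` lifts, via the Kronecker product `z = v ⊗ η`,
to a left PBH obstruction for `(𝒜, ℬ) = (I_N ⊗ A_h + A ⊗ (B_h C_h), B ⊗ B_h)`. -/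
theorem stmt_8 (N M n m : ℕ)
    (A : Matrix (Fin N) (Fin N) ℂ)
    (B : Matrix (Fin N) (Fin M) ℂ)
    (Ah : Matrix (Fin n) (Fin n) ℂ)
    (Bh : Matrix (Fin n) (Fin m) ℂ)
    (Ch : Matrix (Fin m) (Fin n) ℂ)
    (v : Fin N → ℂ) (η : Fin n → ℂ) (l μ : ℂ)
    (hv : v ≠ 0) (hvA : v ᵥ* A = l • v) (hvB : v ᵥ* B = 0)
    (hη : η ≠ 0) (hηA : η ᵥ* (Ah + l • (Bh * Ch)) = μ • η)
    (z : Fin N × Fin n → ℂ) (hz : z = fun p => v p.1 * η p.2) :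
    z ≠ 0 ∧
      z ᵥ* ((1 : Matrix (Fin N) (Fin N) ℂ) ⊗ₖ Ah + A ⊗ₖ (Bh * Ch)) = μ • z ∧
      z ᵥ* (B ⊗ₖ Bh) = 0 := by
  subst hz
  refine ⟨?_, ?_, ?_⟩
  · obtain ⟨i, hi⟩ := Function.ne_iff.mp hv
    obtain ⟨j, hj⟩ := Function.ne_iff.mp hη
    exact Function.ne_iff.mpr ⟨(i, j), mul_ne_zero hi hj⟩
  · rw [vecMul_add, vecMul_kronecker_tensor, vecMul_kronecker_tensor, vecMul_one, hvA]
    funext p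
    have h := congrFun hηA p.2
    simp only [vecMul_add, vecMul_smul, Pi.add_apply, Pi.smul_apply, smul_eq_mul] at h ⊢
    linear_combination v p.1 * h
  · rw [vecMul_kronecker_tensor, hvB]
    funext p
    simp
end

section
/- Let A ∈ ℂ^{N×N}, C ∈ ℂ^{M×N}, A_h ∈ ℂ^{n×n}, B_h ∈ ℂ^{n×m}, C_h ∈ ℂ^{m×n}, and set 𝒜 = I_N ⊗ A_h + A ⊗ (B_h C_h) and 𝒞 = C ⊗ C_h. Suppose w ∈ ℂ^N is nonzero with A w = λ w and C w = 0 for some λ ∈ ℂ, and suppose η ∈ ℂ^n is nonzero with (A_h + λ·(B_h C_h)) η = μ η for some μ ∈ ℂ. Then the vector z = w ⊗ η ∈ ℂ^{Nn} is nonzero and satisfies 𝒜 z = μ z and 𝒞 z = 0. -/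
/-! By the mixed-product rule `(P ⊗ Q)(w ⊗ η) = (P w) ⊗ (Q η)`, the vector `𝒜 (w ⊗ η)` equals
`w ⊗ A_h η + λ w ⊗ B_h C_h η = w ⊗ (A_h + λ B_h C_h) η = μ (w ⊗ η)`, and
`𝒞 (w ⊗ η) = (C w) ⊗ (C_h η) = 0`. -/

open Matrix Kronecker

/-- The mixed-product rule `(P ⊗ Q)(w ⊗ η) = (P w) ⊗ (Q η)`. -/
theorem kronecker_mulVec_tensor {N M n m : ℕ}
    (P : Matrix (Fin M) (Fin N) ℂ) (Q : Matrix (Fin m) (Fin n) ℂ)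
    (w : Fin N → ℂ) (η : Fin n → ℂ) :
    (P ⊗ₖ Q) *ᵥ (fun p : Fin N × Fin n => w p.1 * η p.2) =
      fun p => (P *ᵥ w) p.1 * (Q *ᵥ η) p.2 := by
  ext p
  simp only [mulVec, dotProduct, kroneckerMap_apply, Fintype.sum_prod_type,
    Finset.sum_mul_sum]
  exact Finset.sum_congr rfl fun i _ => Finset.sum_congr rfl fun j _ => by ring

/-- a right PBH obstruction `w` for `(A, C)` together with a right
eigenvector `η` of `A_h + λ B_h C_h` lifts, via the Kronecker product `z = w ⊗ η`,
to a right PBH obstruction for `(𝒜, 𝒞) = (I_N ⊗ A_h + A ⊗ (B_h C_h), C ⊗ C_h)`. -/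
theorem stmt_10 (N M n m : ℕ)
    (A : Matrix (Fin N) (Fin N) ℂ)
    (C : Matrix (Fin M) (Fin N) ℂ)
    (Ah : Matrix (Fin n) (Fin n) ℂ)
    (Bh : Matrix (Fin n) (Fin m) ℂ)
    (Ch : Matrix (Fin m) (Fin n) ℂ)
    (w : Fin N → ℂ) (η : Fin n → ℂ) (l μ : ℂ)
    (hw : w ≠ 0) (hwA : A *ᵥ w = l • w) (hwC : C *ᵥ w = 0)
    (hη : η ≠ 0) (hηA : (Ah + l • (Bh * Ch)) *ᵥ η = μ • η)
    (z : Fin N × Fin n → ℂ) (hz : z = fun p => w p.1 * η p.2) :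
    z ≠ 0 ∧
      ((1 : Matrix (Fin N) (Fin N) ℂ) ⊗ₖ Ah + A ⊗ₖ (Bh * Ch)) *ᵥ z = μ • z ∧
      (C ⊗ₖ Ch) *ᵥ z = 0 := by
  subst hz
  refine ⟨?_, ?_, ?_⟩
  · obtain ⟨i, hi⟩ := Function.ne_iff.mp hw
    obtain ⟨j, hj⟩ := Function.ne_iff.mp hη
    exact Function.ne_iff.mpr ⟨(i, j), mul_ne_zero hi hj⟩
  · rw [add_mulVec, kronecker_mulVec_tensor, kronecker_mulVec_tensor, one_mulVec, hwA]
    ext ⟨i, j⟩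
    have h := congrFun hηA j
    simp only [add_mulVec, smul_mulVec, Pi.add_apply, Pi.smul_apply, smul_eq_mul] at h ⊢
    linear_combination w i * h
  · rw [kronecker_mulVec_tensor, hwC]
    ext p
    simp
end

section
/- Let A ∈ ℂ^{N×N}, C ∈ ℂ^{M×N}, and let D, Nₕ ∈ ℂ^{m×m}. Suppose w ∈ ℂ^N is nonzero with A w = λ w and C w = 0 for some λ ∈ ℂ, and suppose η ∈ ℂ^m is nonzero with (D − λ·Nₕ) η = 0. Then the nonzero vector z = w ⊗ η ∈ ℂ^{Nm} satisfies (I_N ⊗ D − A ⊗ Nₕ) z = 0 and (C ⊗ Nₕ) z = 0; consequently, the (Nm + Mm) × Nm matrix formed by stacking I_N ⊗ D − A ⊗ Nₕ on top of C ⊗ Nₕ has column rank strictly less than Nm. -/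
open Matrix Kronecker

/-!
By the mixed-product rule `(P ⊗ Q)(w ⊗ η) = P w ⊗ Q η`, the eigenvalue equation `A w = l w` turns
`(I ⊗ D - A ⊗ Nh)(w ⊗ η)` into `w ⊗ (D - l Nh) η = 0`, and `C w = 0` gives
`(C ⊗ Nh)(w ⊗ η) = 0`. A pure tensor of nonzero vectors over a field is nonzero, so the stacked
matrix has a nontrivial kernel, and rank-nullity bounds its rank strictly below its number of
columns.
-/

/-- The mixed-product rule for a Kronecker product acting on a pure tensor. -/
lemma kronecker_mulVec_pure {R a b c d : Type*} [CommSemiring R] [Fintype b] [Fintype d]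
    (P : Matrix a b R) (Q : Matrix c d R) (w : b → R) (η : d → R) :
    (P ⊗ₖ Q) *ᵥ (fun p => w p.1 * η p.2) = fun p => (P *ᵥ w) p.1 * (Q *ᵥ η) p.2 := by
  ext ⟨i, j⟩
  simp only [Matrix.mulVec, dotProduct, kroneckerMap_apply, Fintype.sum_prod_type,
    Finset.sum_mul_sum]
  exact Finset.sum_congr rfl fun _ _ => Finset.sum_congr rfl fun _ _ => by ring

lemma rank_lt_card_of_mulVec_eq_zero {K a b : Type*} [Field K] [Fintype b]
    (P : Matrix a b K) {z : b → K} (hz : z ≠ 0) (h : P *ᵥ z = 0) :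
    P.rank < Fintype.card b := by
  have hker : 0 < Module.finrank K (LinearMap.ker P.mulVecLin) := by
    rw [Module.finrank_pos_iff_exists_ne_zero]
    exact ⟨⟨z, h⟩, fun h0 => hz (congrArg Subtype.val h0)⟩
  have hrn := P.mulVecLin.finrank_range_add_finrank_ker
  rw [Module.finrank_fintype_fun_eq_card] at hrn
  rw [Matrix.rank]
  omega

/-- key step of Lemma 6(ii): a right PBH obstruction `w` for `(A, C)`
together with a nonzero `η` with `(D − λ Nₕ) η = 0` gives a nonzero `z = w ⊗ η`
in the kernel of both `I_N ⊗ D − A ⊗ Nₕ` and `C ⊗ Nₕ`, so the stacked matrix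
has rank strictly less than `N m`. -/
theorem stmt_13 (N M m : ℕ)
    (A : Matrix (Fin N) (Fin N) ℂ)
    (C : Matrix (Fin M) (Fin N) ℂ)
    (D Nh : Matrix (Fin m) (Fin m) ℂ)
    (w : Fin N → ℂ) (η : Fin m → ℂ) (l : ℂ)
    (hw : w ≠ 0) (hwA : A *ᵥ w = l • w) (hwC : C *ᵥ w = 0)
    (hη : η ≠ 0) (hηD : (D - l • Nh) *ᵥ η = 0)
    (z : Fin N × Fin m → ℂ) (hz : z = fun p => w p.1 * η p.2) :
    z ≠ 0 ∧
      ((1 : Matrix (Fin N) (Fin N) ℂ) ⊗ₖ D - A ⊗ₖ Nh) *ᵥ z = 0 ∧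
      (C ⊗ₖ Nh) *ᵥ z = 0 ∧
      (Matrix.fromRows ((1 : Matrix (Fin N) (Fin N) ℂ) ⊗ₖ D - A ⊗ₖ Nh)
        (C ⊗ₖ Nh)).rank < N * m := by
  subst hz
  have hz0 : (fun p : Fin N × Fin m => w p.1 * η p.2) ≠ 0 := by
    obtain ⟨i, hi⟩ := Function.ne_iff.mp hw
    obtain ⟨j, hj⟩ := Function.ne_iff.mp hη
    exact Function.ne_iff.mpr ⟨(i, j), mul_ne_zero hi hj⟩
  have h1 : ((1 : Matrix (Fin N) (Fin N) ℂ) ⊗ₖ D - A ⊗ₖ Nh) *ᵥ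
      (fun p => w p.1 * η p.2) = 0 := by
    rw [Matrix.sub_mulVec, kronecker_mulVec_pure, kronecker_mulVec_pure, hwA, Matrix.one_mulVec]
    ext ⟨i, j⟩
    have h := congrFun hηD j
    simp only [Matrix.sub_mulVec, Matrix.smul_mulVec, Pi.sub_apply, Pi.smul_apply, smul_eq_mul,
      Pi.zero_apply] at h ⊢
    linear_combination w i * h
  have h2 : (C ⊗ₖ Nh) *ᵥ (fun p => w p.1 * η p.2) = 0 := by
    rw [kronecker_mulVec_pure, hwC]
    ext p
    simp
  refine ⟨hz0, h1, h2, ?_⟩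
  have hr := rank_lt_card_of_mulVec_eq_zero
    (Matrix.fromRows ((1 : Matrix (Fin N) (Fin N) ℂ) ⊗ₖ D - A ⊗ₖ Nh) (C ⊗ₖ Nh)) hz0 (by
      rw [Matrix.fromRows_mulVec, h1, h2]
      ext (_ | _) <;> rfl)
  simpa using hr
end

section
/- Let A ∈ ℝ^{N×N}, B ∈ ℝ^{N×M}, C ∈ ℝ^{M×N}, K ∈ ℝ^{M×N}, L ∈ ℝ^{N×M}, A_h ∈ ℝ^{n×n}, B_h ∈ ℝ^{n×m}, C_h ∈ ℝ^{m×n}. Then μ ∈ ℂ is an eigenvalue of the 2Nn × 2Nn block matrix [[I_N ⊗ A_h + (A − B K) ⊗ (B_h C_h), (B K) ⊗ (B_h C_h)], [0, I_N ⊗ A_h + (A − L C) ⊗ (B_h C_h)]] if and only if there exists λ ∈ ℂ that is an eigenvalue of A − B K or an eigenvalue of A − L C such that μ is an eigenvalue of A_h + λ·(B_h C_h). -/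
/-!
Over `ℂ` an eigenvalue is a root of the characteristic polynomial, so the block triangular shape
splits the spectrum of the closed loop into the spectra of the two diagonal blocks, both of the form
`1 ⊗ₖ P + X ⊗ₖ G`. For such a block put `p(t) = det (μ - P - t G)`, a polynomial in `t`.
All blocks of `μ - (1 ⊗ₖ P + X ⊗ₖ G)`, grouped by the indices of `P` and `G`, are polynomials in the
single matrix `X`, hence commute, and the determinant of a matrix with commuting blocks
(`Matrix.det_det`) gives `det (μ - (1 ⊗ₖ P + X ⊗ₖ G)) = det (p(X))`. By the spectral mapping theorem
`det (p(X)) = 0` exactly when `p(l) = 0` for some eigenvalue `l` of `X`, that is, when `μ` is an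
eigenvalue of `P + l G`. This avoids bringing `X` to triangular form.
-/

open Matrix Kronecker

open Polynomial in
/-- The polynomial `det (μ - P - t G)` in the variable `t`. -/
noncomputable def pencilPoly {n : Type*} [Fintype n] [DecidableEq n]
    (P G : Matrix n n ℂ) (μ : ℂ) : ℂ[X] :=
  ((Matrix.scalar n μ - P).map C - (X : ℂ[X]) • G.map C).det

lemma eval_pencilPoly {n : Type*} [Fintype n] [DecidableEq n]
    (P G : Matrix n n ℂ) (μ l : ℂ) :
    (pencilPoly P G μ).eval l = (Matrix.scalar n μ - (P + l • G)).det := by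
  rw [pencilPoly, ← Polynomial.coe_evalRingHom, RingHom.map_det]
  congr 1
  ext i j
  simp [sub_sub]
  ring

/-- The commuting-blocks determinant formula for the pencil: the polynomial matrix
`μ - P - t G`, evaluated entrywise at `t = X`, has commuting blocks, so its determinant is that of
the block matrix obtained by expanding them. -/
lemma det_aeval_pencilPoly {N n : Type*} [Fintype N] [DecidableEq N] [Fintype n] [DecidableEq n]
    (X : Matrix N N ℂ) (P G : Matrix n n ℂ) (μ : ℂ) :
    (Polynomial.aeval X (pencilPoly P G μ)).det =
      (Matrix.scalar (N × n) μ - ((1 : Matrix N N ℂ) ⊗ₖ P + X ⊗ₖ G)).det := by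
  have h := Matrix.det_det
    (M := (Matrix.scalar n μ - P).map Polynomial.C -
      (Polynomial.X : Polynomial ℂ) • G.map Polynomial.C)
    (Polynomial.aeval X : Polynomial ℂ →ₐ[ℂ] Matrix N N ℂ).toRingHom
  -- `Matrix.det_det` indexes the blocks by `n × N`, the Kronecker product by `N × n`.
  rw [← Matrix.det_submatrix_equiv_self (Equiv.prodComm N n)] at h
  refine h.trans (congrArg Matrix.det ?_)
  ext ⟨a, i⟩ ⟨b, j⟩
  by_cases hab : a = b <;> by_cases hij : i = j <;>
    simp [hab, hij, Matrix.algebraMap_matrix_apply, Algebra.smul_def, Matrix.mul_apply] <;> ring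

lemma mem_spectrum_iff_det {n : Type*} [Fintype n] [DecidableEq n] (Y : Matrix n n ℂ) (μ : ℂ) :
    μ ∈ spectrum ℂ Y ↔ (Matrix.scalar n μ - Y).det = 0 := by
  rw [Matrix.mem_spectrum_iff_isRoot_charpoly, Polynomial.IsRoot, Matrix.eval_charpoly]

/-- The spectrum of a homogeneous network of agents `P` coupled through `G` with interconnection
matrix `X`. -/
lemma mem_spectrum_kronecker_pencil {N n : Type*} [Fintype N] [DecidableEq N]
    [Fintype n] [DecidableEq n] (X : Matrix N N ℂ) (P G : Matrix n n ℂ) (μ : ℂ) :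
    μ ∈ spectrum ℂ ((1 : Matrix N N ℂ) ⊗ₖ P + X ⊗ₖ G) ↔
      ∃ l ∈ spectrum ℂ X, μ ∈ spectrum ℂ (P + l • G) := by
  have h0 : ∀ Y : Matrix N N ℂ, Y.det = 0 ↔ (0 : ℂ) ∈ spectrum ℂ Y := fun Y => by
    rw [spectrum.zero_mem_iff, Matrix.isUnit_iff_isUnit_det, isUnit_iff_ne_zero, not_not]
  simp only [mem_spectrum_iff_det (n := N × n), mem_spectrum_iff_det (n := n)]
  rw [← det_aeval_pencilPoly, h0]
  simp only [← eval_pencilPoly]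
  -- The spectral mapping theorem needs a nonempty spectrum, which fails only for `0 × 0` matrices.
  rcases isEmpty_or_nonempty N with hN | hN
  · simp [spectrum.of_subsingleton]
  · rw [spectrum.map_polynomial_aeval_of_nonempty X _
      (spectrum.nonempty_of_isAlgClosed_of_finiteDimensional ℂ X)]
    rfl

lemma mem_spectrum_fromBlocks {m n : Type*} [Fintype m] [DecidableEq m]
    [Fintype n] [DecidableEq n] (U : Matrix m m ℂ) (V : Matrix m n ℂ) (W : Matrix n n ℂ) (μ : ℂ) :
    μ ∈ spectrum ℂ (Matrix.fromBlocks U V 0 W) ↔ μ ∈ spectrum ℂ U ∨ μ ∈ spectrum ℂ W := by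
  simp only [Matrix.mem_spectrum_iff_isRoot_charpoly, Matrix.charpoly_fromBlocks_zero₂₁,
    Polynomial.root_mul]

lemma map_kronecker_pencil {N n : Type*} [DecidableEq N] (X : Matrix N N ℝ) (P G : Matrix n n ℝ) :
    ((1 : Matrix N N ℝ) ⊗ₖ P + X ⊗ₖ G).map Complex.ofReal =
      (1 : Matrix N N ℂ) ⊗ₖ P.map Complex.ofReal +
        X.map Complex.ofReal ⊗ₖ G.map Complex.ofReal := by
  ext ⟨a, i⟩ ⟨b, j⟩
  by_cases hab : a = b <;> simp [hab]

/-- `μ` is an eigenvalue of the concatenated closed-loop/error block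
matrix iff there exists `λ`, an eigenvalue of `A − B K` or of `A − L C`, such that
`μ` is an eigenvalue of `A_h + λ • (B_h C_h)`. -/
theorem stmt_14 (N M n m : ℕ)
    (A : Matrix (Fin N) (Fin N) ℝ)
    (B : Matrix (Fin N) (Fin M) ℝ)
    (C : Matrix (Fin M) (Fin N) ℝ)
    (K : Matrix (Fin M) (Fin N) ℝ)
    (L : Matrix (Fin N) (Fin M) ℝ)
    (Ah : Matrix (Fin n) (Fin n) ℝ)
    (Bh : Matrix (Fin n) (Fin m) ℝ)
    (Ch : Matrix (Fin m) (Fin n) ℝ)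
    (μ : ℂ) :
    μ ∈ spectrum ℂ
        ((Matrix.fromBlocks
            ((1 : Matrix (Fin N) (Fin N) ℝ) ⊗ₖ Ah + (A - B * K) ⊗ₖ (Bh * Ch))
            ((B * K) ⊗ₖ (Bh * Ch))
            0
            ((1 : Matrix (Fin N) (Fin N) ℝ) ⊗ₖ Ah + (A - L * C) ⊗ₖ (Bh * Ch))).map
          Complex.ofReal)
      ↔ ∃ l : ℂ,
          (l ∈ spectrum ℂ ((A - B * K).map Complex.ofReal) ∨
            l ∈ spectrum ℂ ((A - L * C).map Complex.ofReal)) ∧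
          μ ∈ spectrum ℂ (Ah.map Complex.ofReal + l • (Bh * Ch).map Complex.ofReal) := by
  rw [Matrix.fromBlocks_map, Matrix.map_zero _ Complex.ofReal_zero, mem_spectrum_fromBlocks,
    map_kronecker_pencil, map_kronecker_pencil, mem_spectrum_kronecker_pencil,
    mem_spectrum_kronecker_pencil]
  simp only [or_and_right, exists_or]
end
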